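/- Assume n ≥ 2 and C is an n×n matrix with all entries positive. Then there exists δ > 0, depending only on C, such that for every admissible weight function g with L⁻(g) ≥ δ, the map u_g has at least two distinct fixed points in Σ. -/

import Mathlib

open Set Matrix

/-- An admissible weight function. -/
def IsAdmissible (g g' : ℝ → ℝ) : Prop :=
  (∀ x ∈ Set.Icc (0:ℝ) 1, HasDerivWithinAt g (g' x) (Set.Icc (0:ℝ) 1) x) ∧
  ContinuousOn g' (Set.Icc (0:ℝ) 1) ∧
  g 0 = 1 ∧
  (∀ x ∈ Set.Icc (0:ℝ) 1, 0 < g x) ∧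
  (∀ x ∈ Set.Icc (0:ℝ) 1, 0 < g' x)

/-- The set of values `g'(x)/g(x)` for `x ∈ [0,1]`; its minimum is `L⁻(g)`. -/
def ratioSet (g g' : ℝ → ℝ) : Set ℝ := (fun x => g' x / g x) '' Set.Icc (0:ℝ) 1

/-- The stochastic matrix `M_g(x)`. -/
noncomputable def Mg {n : ℕ} (C : Matrix (Fin n) (Fin n) ℝ) (g : ℝ → ℝ)
    (x : Fin n → ℝ) : Matrix (Fin n) (Fin n) ℝ :=
  Matrix.of fun i j => C i j * g (x j) / ∑ k, C i k * g (x k)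

/-!
For each vertex `m` we find a point `x` near it with `x = x M_g(x)`. Write `x` in terms of the
small vector `p` of its coordinates other than `m`. The obvious map `x ↦ x M_g(x)` is not monotone
in `p`, because `g (x k)` also enters the row sums of `C i k * g (x k)`. This is cured by a second
unknown `B`, where `B j` stands for `x j / g (x j)` up to a common factor: after replacing each
`g (x k)` in the row sums by `p k / B k`, and normalizing the remaining weight at `m` to
`1 - K ^ 2 * ∑ y`, with `K` bounding the ratios of entries of `C` and `y` the ratios `x k / x m`,
the row sums decrease in `(p, B)`. The remaining factor `g (p k) / g (1 - ∑ p)` increases in `p`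
and is tiny once `L⁻(g)` is large, so a box of pairs `(p, B)` is mapped monotonically into itself,
and the Knaster–Tarski theorem provides a fixed point.
-/

theorem exists_isLUB_pi_prod_pi {ι κ : Type*} {S : Set ((ι → ℝ) × (κ → ℝ))}
    (hne : S.Nonempty) (hbdd : BddAbove S) : ∃ w, IsLUB S w := by
  obtain ⟨hfst, hsnd⟩ := bddAbove_prod.1 hbdd
  exact ⟨(_, _), isLUB_prod.2
    ⟨isLUB_pi.2 fun i => isLUB_csSup ((hne.image _).image _) (bddAbove_pi.1 hfst i),
      isLUB_pi.2 fun k => isLUB_csSup ((hne.image _).image _) (bddAbove_pi.1 hsnd k)⟩⟩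

theorem exists_fixedPoint_of_monotoneOn_Icc {α : Type*} [PartialOrder α]
    (hlub : ∀ S : Set α, S.Nonempty → BddAbove S → ∃ x, IsLUB S x) {a b : α} (hab : a ≤ b)
    {f : α → α} (hmaps : MapsTo f (Icc a b) (Icc a b)) (hmono : MonotoneOn f (Icc a b)) :
    ∃ x ∈ Icc a b, f x = x := by
  let S : Set α := {x ∈ Icc a b | x ≤ f x}
  have ha : a ∈ S := ⟨left_mem_Icc.2 hab, (hmaps (left_mem_Icc.2 hab)).1⟩
  obtain ⟨x, hx⟩ := hlub S ⟨a, ha⟩ ⟨b, fun z hz => hz.1.2⟩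
  have hxI : x ∈ Icc a b := ⟨hx.1 ha, hx.2 fun z hz => hz.1.2⟩
  have hle : x ≤ f x := hx.2 fun z hz => hz.2.trans (hmono hz.1 hxI (hx.1 hz))
  have hfx : f x ∈ S := ⟨hmaps hxI, hmono hxI (hmaps hxI) hle⟩
  exact ⟨x, hxI, (hx.1 hfx).antisymm hle⟩

/-- Positivity on `[0, 1]` together with logarithmic growth at rate at least `δ` there; for
differentiable `g` the latter says `L⁻(g) ≥ δ`. -/
structure HasLogGrowth (δ : ℝ) (g : ℝ → ℝ) : Prop where
  pos : ∀ t ∈ Icc (0 : ℝ) 1, 0 < g t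
  mul_sub_le_log : ∀ s ∈ Icc (0 : ℝ) 1, ∀ t ∈ Icc (0 : ℝ) 1, s ≤ t →
    δ * (t - s) ≤ Real.log (g t) - Real.log (g s)

theorem IsAdmissible.hasLogGrowth {g g' : ℝ → ℝ} {δ : ℝ} (hg : IsAdmissible g g')
    (hδ : δ ∈ lowerBounds (ratioSet g g')) : HasLogGrowth δ g := by
  obtain ⟨hderiv, -, -, hpos, -⟩ := hg
  have hlog : ∀ t ∈ Icc (0 : ℝ) 1,
      HasDerivWithinAt (fun t => Real.log (g t)) (g' t / g t) (Icc 0 1) t :=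
    fun t ht => (hderiv t ht).log (hpos t ht).ne'
  have hlog_interior : ∀ t ∈ interior (Icc (0 : ℝ) 1),
      HasDerivAt (fun t => Real.log (g t)) (g' t / g t) t :=
    fun t ht => (hlog t (interior_subset ht)).hasDerivAt (mem_interior_iff_mem_nhds.1 ht)
  refine ⟨hpos, (convex_Icc 0 1).mul_sub_le_image_sub_of_le_deriv
    (fun t ht => (hlog t ht).continuousWithinAt)
    (fun t ht => (hlog_interior t ht).differentiableAt.differentiableWithinAt) fun t ht => ?_⟩
  rw [(hlog_interior t ht).deriv]
  exact hδ ⟨t, interior_subset ht, rfl⟩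

namespace HasLogGrowth

variable {δ : ℝ} {g : ℝ → ℝ} {s t : ℝ}

theorem mul_exp_le (hg : HasLogGrowth δ g) (hs : s ∈ Icc (0 : ℝ) 1) (ht : t ∈ Icc (0 : ℝ) 1)
    (hst : s ≤ t) : g s * Real.exp (δ * (t - s)) ≤ g t := by
  have hlog := hg.mul_sub_le_log s hs t ht hst
  calc g s * Real.exp (δ * (t - s))
      = Real.exp (Real.log (g s) + δ * (t - s)) := by
        rw [Real.exp_add, Real.exp_log (hg.pos s hs)]
    _ ≤ Real.exp (Real.log (g t)) := Real.exp_le_exp.2 (by linarith)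
    _ = g t := Real.exp_log (hg.pos t ht)

theorem mul_one_add_le (hg : HasLogGrowth δ g) (hs : s ∈ Icc (0 : ℝ) 1)
    (ht : t ∈ Icc (0 : ℝ) 1) (hst : s ≤ t) : g s * (1 + δ * (t - s)) ≤ g t :=
  (mul_le_mul_of_nonneg_left (by linarith [Real.add_one_le_exp (δ * (t - s))])
    (hg.pos s hs).le).trans (hg.mul_exp_le hs ht hst)

theorem monotoneOn (hg : HasLogGrowth δ g) (hδ : 0 ≤ δ) : MonotoneOn g (Icc 0 1) := by
  intro s hs t ht hst
  have hgap : 0 ≤ δ * (t - s) := mul_nonneg hδ (sub_nonneg.2 hst)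
  calc g s ≤ g s * (1 + δ * (t - s)) :=
        le_mul_of_one_le_right (hg.pos s hs).le (by linarith)
    _ ≤ g t := hg.mul_one_add_le hs ht hst

theorem div_le_of_half_le_sub (hg : HasLogGrowth δ g) (hδ : 0 < δ) (hs : s ∈ Icc (0 : ℝ) 1)
    (ht : t ∈ Icc (0 : ℝ) 1) (hst : 1 / 2 ≤ t - s) : g s / g t ≤ 2 / δ := by
  rw [div_le_div_iff₀ (hg.pos t ht) hδ]
  have hgrow := hg.mul_one_add_le hs ht (by linarith)
  have hhalf : δ / 2 ≤ 1 + δ * (t - s) := by nlinarith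
  have := mul_le_mul_of_nonneg_left hhalf (hg.pos s hs).le
  linarith

theorem one_sub_mul_div_apply_one_sub_mono (hg : HasLogGrowth δ g) {r : ℝ} (hr : 0 ≤ r)
    (hδ : 2 * r ≤ δ) (hs : 0 ≤ s) (hst : s ≤ t) (ht : t ≤ 1) (hrt : r * t ≤ 1 / 2) :
    (1 - r * s) / g (1 - s) ≤ (1 - r * t) / g (1 - t) := by
  have hsI : 1 - s ∈ Icc (0 : ℝ) 1 := ⟨by linarith, by linarith⟩
  have htI : 1 - t ∈ Icc (0 : ℝ) 1 := ⟨by linarith, by linarith⟩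
  have hgrow : g (1 - t) * (1 + δ * (t - s)) ≤ g (1 - s) := by
    have := hg.mul_one_add_le htI hsI (by linarith)
    rwa [sub_sub_sub_cancel_left] at this
  have hrate : r ≤ (1 - r * t) * δ := by nlinarith
  have hfactor : 1 - r * s ≤ (1 - r * t) * (1 + δ * (t - s)) := by
    nlinarith [mul_le_mul_of_nonneg_right hrate (sub_nonneg.2 hst)]
  rw [div_le_div_iff₀ (hg.pos _ hsI) (hg.pos _ htI)]
  calc (1 - r * s) * g (1 - t)
      ≤ (1 - r * t) * (1 + δ * (t - s)) * g (1 - t) :=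
        mul_le_mul_of_nonneg_right hfactor (hg.pos _ htI).le
    _ = (1 - r * t) * (g (1 - t) * (1 + δ * (t - s))) := by ring
    _ ≤ (1 - r * t) * g (1 - s) := mul_le_mul_of_nonneg_left hgrow (by linarith)

end HasLogGrowth

section Reweight

variable {ι : Type*} [Fintype ι]

/-- The stochastic matrix obtained from `C` by multiplying the columns by the weights `w` and
normalizing the rows, so that `Mg C g x = reweight C (g ∘ x)`. -/
noncomputable def reweight (C : Matrix ι ι ℝ) (w : ι → ℝ) : Matrix ι ι ℝ :=
  Matrix.of fun i j => C i j * w j / (C *ᵥ w) i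

variable {C : Matrix ι ι ℝ} {w : ι → ℝ}

theorem vecMul_reweight_apply (x : ι → ℝ) (j : ι) :
    (x ᵥ* reweight C w) j = w j * ((x / (C *ᵥ w)) ᵥ* C) j := by
  simp only [vecMul, dotProduct, reweight, of_apply, Pi.div_apply, Finset.mul_sum]
  exact Finset.sum_congr rfl fun i _ => by ring

theorem reweight_smul {r : ℝ} (hr : r ≠ 0) : reweight C (r • w) = reweight C w := by
  ext i j
  simp only [reweight, of_apply, mulVec_smul, Pi.smul_apply, smul_eq_mul]
  rw [mul_left_comm, mul_div_mul_left _ _ hr]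

theorem sum_vecMul_reweight (hw : ∀ i, (C *ᵥ w) i ≠ 0) (x : ι → ℝ) :
    ∑ j, (x ᵥ* reweight C w) j = ∑ i, x i := by
  have hrow : ∀ i, ∑ j, reweight C w i j = 1 := fun i => by
    simp only [reweight, of_apply, ← Finset.sum_div]
    exact div_self (hw i)
  simp only [vecMul, dotProduct]
  rw [Finset.sum_comm]
  exact Finset.sum_congr rfl fun i _ => by rw [← Finset.mul_sum, hrow, mul_one]

theorem vecMul_reweight_eq_self_of_forall_ne (hw : ∀ i, (C *ᵥ w) i ≠ 0)
    {x : ι → ℝ} (m : ι) (hx : ∀ k : {k // k ≠ m}, (x ᵥ* reweight C w) k = x k) :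
    x ᵥ* reweight C w = x := by
  classical
  have hsum := sum_vecMul_reweight hw x
  rw [Fintype.sum_eq_add_sum_subtype_ne _ m, Fintype.sum_eq_add_sum_subtype_ne x m,
    Finset.sum_congr rfl fun k _ => hx k, add_left_inj] at hsum
  funext j
  obtain rfl | hj := eq_or_ne j m
  exacts [hsum, hx ⟨j, hj⟩]

end Reweight

section InsertAt

variable {ι : Type*} (m : ι)

theorem forall_iff_and_forall_ne {P : ι → Prop} :
    (∀ i, P i) ↔ P m ∧ ∀ k : {k // k ≠ m}, P k :=
  ⟨fun h => ⟨h m, fun k => h k⟩,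
    fun h i => (eq_or_ne i m).elim (fun hi => hi ▸ h.1) fun hi => h.2 ⟨i, hi⟩⟩

variable [DecidableEq ι]

/-- The vector with coordinate `a` at `m` and the coordinates `p` elsewhere. -/
def insertAt (a : ℝ) (p : {k // k ≠ m} → ℝ) : ι → ℝ :=
  (Equiv.funSplitAt m ℝ).symm (a, p)

variable {a b : ℝ} {p q : {k // k ≠ m} → ℝ}

@[simp]
theorem insertAt_self : insertAt m a p m = a := by simp [insertAt]

@[simp]
theorem insertAt_coe (k : {k // k ≠ m}) : insertAt m a p k = p k := by simp [insertAt, k.2]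

theorem smul_insertAt (c : ℝ) : c • insertAt m a p = insertAt m (c * a) (c • p) :=
  funext ((forall_iff_and_forall_ne m).2 (by simp))

theorem insertAt_le_insertAt (hab : a ≤ b) (hpq : p ≤ q) : insertAt m a p ≤ insertAt m b q :=
  (forall_iff_and_forall_ne m).2 ⟨by simpa using hab, fun k => by simpa using hpq k⟩

theorem insertAt_nonneg (ha : 0 ≤ a) (hp : 0 ≤ p) : 0 ≤ insertAt m a p :=
  (forall_iff_and_forall_ne m).2 ⟨by simpa using ha, fun k => by simpa using hp k⟩

variable [Fintype ι]

theorem sum_insertAt : ∑ i, insertAt m a p i = a + ∑ k, p k := by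
  simp [Fintype.sum_eq_add_sum_subtype_ne _ m]

theorem mulVec_insertAt (C : Matrix ι ι ℝ) (i : ι) :
    (C *ᵥ insertAt m a p) i = C i m * a + ∑ k : {k // k ≠ m}, C i k * p k := by
  simp [mulVec, dotProduct, Fintype.sum_eq_add_sum_subtype_ne _ m]

end InsertAt

/-- All entries of `C` are positive and the ratio of any two is at most `K`. -/
structure ComparableEntries {ι : Type*} (C : Matrix ι ι ℝ) (K : ℝ) : Prop where
  pos : ∀ i j, 0 < C i j
  le_mul : ∀ i j k l, C i j ≤ K * C k l

theorem exists_comparableEntries {ι : Type*} [Finite ι] {C : Matrix ι ι ℝ}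
    (hC : ∀ i j, 0 < C i j) : ∃ K, ComparableEntries C K := by
  obtain ⟨K, hK⟩ := Finite.exists_le fun t : (ι × ι) × ι × ι => C t.1.1 t.1.2 / C t.2.1 t.2.2
  exact ⟨K, hC, fun i j k l => (div_le_iff₀ (hC k l)).1 (hK ((i, j), k, l))⟩

section ColumnMass

variable {ι : Type*} [Fintype ι] [DecidableEq ι]

/-- Column weights proportional to the weights `g (x j)` sought, written in terms of the ratios
`y k = x k / x m` and the column masses `B`. The factor at `m` fixes the normalization which makes
`C *ᵥ columnWeight m K y B` antitone in `(y, B)`. -/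
noncomputable def columnWeight (m : ι) (K : ℝ) (y B : {k // k ≠ m} → ℝ) : ι → ℝ :=
  insertAt m (1 - K ^ 2 * ∑ k, y k) (y / B)

/-- The factor by which `columnWeight m K y B k` has to be multiplied to give the `k`-th coordinate
of `insertAt m 1 y ᵥ* reweight C (columnWeight m K y B)`. -/
noncomputable def columnMass (C : Matrix ι ι ℝ) (m : ι) (K : ℝ) (y B : {k // k ≠ m} → ℝ) :
    {k // k ≠ m} → ℝ :=
  fun k => ((insertAt m 1 y / (C *ᵥ columnWeight m K y B)) ᵥ* C) k

theorem mulVec_columnWeight (C : Matrix ι ι ℝ) (m : ι) (K : ℝ) (y B : {k // k ≠ m} → ℝ) (i : ι) :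
    (C *ᵥ columnWeight m K y B) i =
      C i m - ∑ k : {k // k ≠ m}, (K ^ 2 * C i m - C i k / B k) * y k := by
  have hcomm : ∑ k : {k // k ≠ m}, C i k / B k * y k = ∑ k : {k // k ≠ m}, C i k * (y k / B k) :=
    Finset.sum_congr rfl fun k _ => by ring
  simp only [columnWeight, mulVec_insertAt, sub_mul, Finset.sum_sub_distrib, ← Finset.mul_sum,
    Pi.div_apply, hcomm]
  ring

end ColumnMass

namespace ComparableEntries

variable {ι : Type*} {C : Matrix ι ι ℝ} {K : ℝ} {m : ι} {y y' B B' : {k // k ≠ m} → ℝ}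

theorem one_le (hC : ComparableEntries C K) (i : ι) : 1 ≤ K :=
  (le_mul_iff_one_le_left (hC.pos i i)).1 (hC.le_mul i i i i)

theorem div_le_sq_mul (hC : ComparableEntries C K) {b : ℝ} (hb : K⁻¹ ≤ b) (i j k l : ι) :
    C i j / b ≤ K ^ 2 * C k l := by
  have hK : 0 < K := one_pos.trans_le (hC.one_le i)
  calc C i j / b ≤ C i j / K⁻¹ := div_le_div_of_nonneg_left (hC.pos i j).le (inv_pos.2 hK) hb
    _ = K * C i j := by rw [div_inv_eq_mul, mul_comm]
    _ ≤ K * (K * C k l) := mul_le_mul_of_nonneg_left (hC.le_mul i j k l) hK.le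
    _ = K ^ 2 * C k l := by ring

theorem pos_of_inv_le (hC : ComparableEntries C K) (hB : ∀ k, K⁻¹ ≤ B k) (k : {k // k ≠ m}) :
    0 < B k :=
  (inv_pos.2 (one_pos.trans_le (hC.one_le m))).trans_le (hB k)

variable [Fintype ι] [DecidableEq ι]

theorem mulVec_columnWeight_anti (hC : ComparableEntries C K) (hy : 0 ≤ y) (hyy' : y ≤ y')
    (hB : ∀ k, K⁻¹ ≤ B k) (hBB' : B ≤ B') :
    C *ᵥ columnWeight m K y' B' ≤ C *ᵥ columnWeight m K y B := fun i => by
  simp only [mulVec_columnWeight]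
  refine sub_le_sub_left (Finset.sum_le_sum fun k _ =>
    mul_le_mul (sub_le_sub_left ?_ _) (hyy' k) (hy k)
      (sub_nonneg.2 (hC.div_le_sq_mul ((hB k).trans (hBB' k)) _ _ _ _))) _
  exact div_le_div_of_nonneg_left (hC.pos i k).le (hC.pos_of_inv_le hB k) (hBB' k)

theorem mulVec_columnWeight_le (hC : ComparableEntries C K) (hy : 0 ≤ y)
    (hB : ∀ k, K⁻¹ ≤ B k) (i : ι) : (C *ᵥ columnWeight m K y B) i ≤ C i m := by
  rw [mulVec_columnWeight]
  exact sub_le_self _ (Finset.sum_nonneg fun k _ =>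
    mul_nonneg (sub_nonneg.2 (hC.div_le_sq_mul (hB k) _ _ _ _)) (hy k))

theorem half_le_mulVec_columnWeight (hC : ComparableEntries C K) (hy : 0 ≤ y)
    (hsum : K ^ 2 * ∑ k, y k ≤ 1 / 2) (hB : ∀ k, K⁻¹ ≤ B k) (i : ι) :
    C i m / 2 ≤ (C *ᵥ columnWeight m K y B) i := by
  have hrest : 0 ≤ ∑ k : {k // k ≠ m}, C i k * (y / B) k := Finset.sum_nonneg fun k _ =>
    mul_nonneg (hC.pos i k).le (div_nonneg (hy k) (hC.pos_of_inv_le hB k).le)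
  rw [columnWeight, mulVec_insertAt]
  nlinarith [hC.pos i m]

theorem mulVec_columnWeight_pos (hC : ComparableEntries C K) (hy : 0 ≤ y)
    (hsum : K ^ 2 * ∑ k, y k ≤ 1 / 2) (hB : ∀ k, K⁻¹ ≤ B k) (i : ι) :
    0 < (C *ᵥ columnWeight m K y B) i :=
  (half_pos (hC.pos i m)).trans_le (hC.half_le_mulVec_columnWeight hy hsum hB i)

theorem columnMass_mono (hC : ComparableEntries C K) (hy : 0 ≤ y) (hyy' : y ≤ y')
    (hsum : K ^ 2 * ∑ k, y' k ≤ 1 / 2) (hB : ∀ k, K⁻¹ ≤ B k) (hBB' : B ≤ B') :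
    columnMass C m K y B ≤ columnMass C m K y' B' := fun k =>
  Finset.sum_le_sum fun i _ => mul_le_mul_of_nonneg_right
    (div_le_div₀ (insertAt_nonneg m zero_le_one (hy.trans hyy') i)
      (insertAt_le_insertAt m le_rfl hyy' i)
      (hC.mulVec_columnWeight_pos (hy.trans hyy') hsum (fun k => (hB k).trans (hBB' k)) i)
      (hC.mulVec_columnWeight_anti hy hyy' hB hBB' i))
    (hC.pos i k).le

theorem inv_le_columnMass (hC : ComparableEntries C K) (hy : 0 ≤ y)
    (hsum : K ^ 2 * ∑ k, y k ≤ 1 / 2) (hB : ∀ k, K⁻¹ ≤ B k) (k : {k // k ≠ m}) :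
    K⁻¹ ≤ columnMass C m K y B k := by
  have hK : 0 < K := one_pos.trans_le (hC.one_le m)
  have hpos := hC.mulVec_columnWeight_pos hy hsum hB
  calc K⁻¹ ≤ C m k / C m m := by
        rw [le_div_iff₀ (hC.pos m m), inv_mul_le_iff₀ hK]
        exact hC.le_mul m m m k
    _ ≤ C m k / (C *ᵥ columnWeight m K y B) m :=
        div_le_div_of_nonneg_left (hC.pos m k).le (hpos m) (hC.mulVec_columnWeight_le hy hB m)
    _ = (insertAt m 1 y / (C *ᵥ columnWeight m K y B)) m * C m k := by
        rw [Pi.div_apply, insertAt_self, one_div_mul_eq_div]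
    _ ≤ columnMass C m K y B k := Finset.single_le_sum
        (f := fun i => (insertAt m 1 y / (C *ᵥ columnWeight m K y B)) i * C i k)
        (fun i _ => mul_nonneg (div_nonneg (insertAt_nonneg m zero_le_one hy i) (hpos i).le)
          (hC.pos i k).le) (Finset.mem_univ m)

theorem columnMass_le (hC : ComparableEntries C K) (hy : 0 ≤ y)
    (hsum : K ^ 2 * ∑ k, y k ≤ 1 / 2) (hB : ∀ k, K⁻¹ ≤ B k) (k : {k // k ≠ m}) :
    columnMass C m K y B k ≤ 4 * K := by
  have hK := hC.one_le m
  have hentry : ∀ i, C i k / (C *ᵥ columnWeight m K y B) i ≤ 2 * K := fun i => by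
    rw [div_le_iff₀ (hC.mulVec_columnWeight_pos hy hsum hB i)]
    nlinarith [hC.half_le_mulVec_columnWeight hy hsum hB i, hC.le_mul i k i m]
  have hmass : ∑ i, insertAt m 1 y i ≤ 2 := by
    have : 0 ≤ ∑ k, y k := Finset.sum_nonneg fun k _ => hy k
    rw [sum_insertAt]
    nlinarith
  calc columnMass C m K y B k
      ≤ ∑ i, insertAt m 1 y i * (2 * K) := Finset.sum_le_sum fun i _ => by
        rw [Pi.div_apply, div_mul_eq_mul_div, mul_div_assoc]
        exact mul_le_mul_of_nonneg_left (hentry i) (insertAt_nonneg m zero_le_one hy i)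
    _ = (∑ i, insertAt m 1 y i) * (2 * K) := (Finset.sum_mul ..).symm
    _ ≤ 2 * (2 * K) := mul_le_mul_of_nonneg_right hmass (by linarith)
    _ = 4 * K := by ring

end ComparableEntries

section VertexMap

variable {ι : Type*} [Fintype ι] {m : ι} {K : ℝ}

/-- The rate of logarithmic growth beyond which every vertex of the simplex has an invariant
point of its own. With this value, `B k ≤ 4 * K` and
`g (p k) / g (1 - ∑ p) ≤ 2 / growthThreshold ι K` keep `p k` below `1 / (4 * K ^ 2 * card ι)`. -/
noncomputable def growthThreshold (ι : Type*) [Fintype ι] (K : ℝ) : ℝ :=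
  32 * K ^ 3 * Fintype.card ι

theorem two_mul_sq_add_one_le_growthThreshold [Nonempty ι] (hK : 1 ≤ K) :
    2 * (K ^ 2 + 1) ≤ growthThreshold ι K := by
  have hι : (1 : ℝ) ≤ Fintype.card ι := Nat.one_le_cast.2 Fintype.card_pos
  have hsq : 1 ≤ K ^ 2 := one_le_pow₀ hK
  calc 2 * (K ^ 2 + 1) ≤ 32 * K ^ 2 * 1 := by linarith
    _ ≤ 32 * K ^ 3 * Fintype.card ι := by
      gcongr
      norm_num

theorem growthThreshold_pos [Nonempty ι] (hK : 1 ≤ K) : 0 < growthThreshold ι K := by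
  linarith [two_mul_sq_add_one_le_growthThreshold (ι := ι) hK, sq_nonneg K]

/-- The box of pairs `(p, B)` which `vertexMap C m K g` maps monotonically into itself: `p` is
small, so that `insertAt m (1 - ∑ k, p k) p` is near the vertex `m`. -/
def vertexBox (m : ι) (K : ℝ) : Set (({k // k ≠ m} → ℝ) × ({k // k ≠ m} → ℝ)) :=
  Icc (0, fun _ => K⁻¹) (fun _ => (4 * K ^ 2 * Fintype.card ι)⁻¹, fun _ => 4 * K)

variable {w : ({k // k ≠ m} → ℝ) × ({k // k ≠ m} → ℝ)}

theorem apply_le_quarter_of_mem_vertexBox (hK : 1 ≤ K) (hw : w ∈ vertexBox m K)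
    (k : {k // k ≠ m}) : w.1 k ≤ 1 / 4 := by
  have hcard : (1 : ℝ) ≤ Fintype.card ι := Nat.one_le_cast.2 (Fintype.card_pos_iff.2 ⟨m⟩)
  calc w.1 k ≤ (4 * K ^ 2 * Fintype.card ι)⁻¹ := hw.2.1 k
    _ ≤ (4 : ℝ)⁻¹ := inv_anti₀ four_pos (by nlinarith [one_le_pow₀ (n := 2) hK])
    _ = 1 / 4 := by norm_num

theorem apply_mem_Icc_of_mem_vertexBox (hK : 1 ≤ K) (hw : w ∈ vertexBox m K)
    (k : {k // k ≠ m}) : w.1 k ∈ Icc (0 : ℝ) 1 :=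
  ⟨hw.1.1 k, (apply_le_quarter_of_mem_vertexBox hK hw k).trans (by norm_num)⟩

/-- For a point `x` with coordinate `1 - s` at the vertex, the constant of proportionality in
`(1 - s) • columnWeight = weightFactor K g s • (g ∘ x)`. -/
noncomputable def weightFactor (K : ℝ) (g : ℝ → ℝ) (s : ℝ) : ℝ :=
  (1 - (K ^ 2 + 1) * s) / g (1 - s)

variable [DecidableEq ι]

/-- The ratios `x k / x m` for the point `x = insertAt m (1 - ∑ k, p k) p`. -/
noncomputable def vertexRatios (p : {k // k ≠ m} → ℝ) : {k // k ≠ m} → ℝ :=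
  (1 - ∑ k, p k)⁻¹ • p

theorem vertexRatios_nonneg {p : {k // k ≠ m} → ℝ} (hp : 0 ≤ p) (hsum : ∑ k, p k ≤ 1) :
    0 ≤ vertexRatios p :=
  smul_nonneg (inv_nonneg.2 (sub_nonneg.2 hsum)) hp

theorem vertexRatios_mono {p q : {k // k ≠ m} → ℝ} (hp : 0 ≤ p) (hpq : p ≤ q)
    (hsum : ∑ k, q k < 1) : vertexRatios p ≤ vertexRatios q := by
  have hle : 1 - ∑ k, q k ≤ 1 - ∑ k, p k :=
    sub_le_sub_left (Finset.sum_le_sum fun k _ => hpq k) 1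
  have hpos : 0 < 1 - ∑ k, q k := sub_pos.2 hsum
  exact smul_le_smul (inv_anti₀ hpos hle) hpq (inv_nonneg.2 (hpos.le.trans hle)) (hp.trans hpq)

theorem sum_vertexRatios (p : {k // k ≠ m} → ℝ) :
    ∑ k, vertexRatios p k = (∑ k, p k) / (1 - ∑ k, p k) := by
  simp only [vertexRatios, Pi.smul_apply, smul_eq_mul, ← Finset.mul_sum]
  rw [inv_mul_eq_div]

/-- The monotone map whose fixed points `(p, B)` yield points `x = insertAt m (1 - ∑ k, p k) p` with
`x = x ᵥ* reweight C (g ∘ x)`. -/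
noncomputable def vertexMap (C : Matrix ι ι ℝ) (m : ι) (K : ℝ) (g : ℝ → ℝ)
    (w : ({k // k ≠ m} → ℝ) × ({k // k ≠ m} → ℝ)) :
    ({k // k ≠ m} → ℝ) × ({k // k ≠ m} → ℝ) :=
  (fun k => w.2 k * (g (w.1 k) * weightFactor K g (∑ j, w.1 j)),
    columnMass C m K (vertexRatios w.1) w.2)

theorem sum_nonneg_of_mem_vertexBox (hw : w ∈ vertexBox m K) : 0 ≤ ∑ k, w.1 k :=
  Finset.sum_nonneg fun k _ => hw.1.1 k

theorem four_mul_sq_mul_sum_le_one (hK : 1 ≤ K) (hw : w ∈ vertexBox m K) :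
    4 * K ^ 2 * ∑ k, w.1 k ≤ 1 := by
  have hι : (0 : ℝ) < Fintype.card ι := Nat.cast_pos.2 (Fintype.card_pos_iff.2 ⟨m⟩)
  have hcard : (Fintype.card {k // k ≠ m} : ℝ) ≤ Fintype.card ι :=
    Nat.cast_le.2 (Fintype.card_subtype_le _)
  calc 4 * K ^ 2 * ∑ k, w.1 k
      ≤ 4 * K ^ 2 * ∑ _k : {k // k ≠ m}, (4 * K ^ 2 * Fintype.card ι : ℝ)⁻¹ := by
        gcongr with k
        exact hw.2.1 k
    _ = 4 * K ^ 2 * (Fintype.card {k // k ≠ m} * (4 * K ^ 2 * Fintype.card ι : ℝ)⁻¹) := by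
        rw [Finset.sum_const, Finset.card_univ, nsmul_eq_mul]
    _ ≤ 4 * K ^ 2 * (Fintype.card ι * (4 * K ^ 2 * Fintype.card ι : ℝ)⁻¹) := by gcongr
    _ = 1 := by field_simp

theorem sum_le_quarter_of_mem_vertexBox (hK : 1 ≤ K) (hw : w ∈ vertexBox m K) :
    ∑ k, w.1 k ≤ 1 / 4 := by
  linarith [four_mul_sq_mul_sum_le_one hK hw,
    le_mul_of_one_le_left (sum_nonneg_of_mem_vertexBox hw) (one_le_pow₀ (n := 2) hK)]

theorem one_sub_sum_mem_Icc_of_mem_vertexBox (hK : 1 ≤ K) (hw : w ∈ vertexBox m K) :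
    1 - ∑ k, w.1 k ∈ Icc (0 : ℝ) 1 :=
  ⟨by linarith [sum_le_quarter_of_mem_vertexBox hK hw],
    sub_le_self _ (sum_nonneg_of_mem_vertexBox hw)⟩

theorem vertexRatios_nonneg_of_mem_vertexBox (hK : 1 ≤ K) (hw : w ∈ vertexBox m K) :
    0 ≤ vertexRatios w.1 :=
  vertexRatios_nonneg hw.1.1 (by linarith [sum_le_quarter_of_mem_vertexBox hK hw])

theorem sq_mul_sum_vertexRatios_le_half (hK : 1 ≤ K) (hw : w ∈ vertexBox m K) :
    K ^ 2 * ∑ k, vertexRatios w.1 k ≤ 1 / 2 := by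
  have hsum := sum_le_quarter_of_mem_vertexBox hK hw
  rw [sum_vertexRatios, ← mul_div_assoc, div_le_iff₀ (by linarith)]
  linarith [four_mul_sq_mul_sum_le_one hK hw]

theorem sq_add_one_mul_sum_le_half (hK : 1 ≤ K) (hw : w ∈ vertexBox m K) :
    (K ^ 2 + 1) * ∑ k, w.1 k ≤ 1 / 2 := by
  linarith [four_mul_sq_mul_sum_le_one hK hw, sum_le_quarter_of_mem_vertexBox hK hw]

theorem weightFactor_pos {g : ℝ → ℝ} (hg : ∀ t ∈ Icc (0 : ℝ) 1, 0 < g t) (hK : 1 ≤ K)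
    (hw : w ∈ vertexBox m K) :
    0 < weightFactor K g (∑ k, w.1 k) :=
  div_pos (by linarith [sq_add_one_mul_sum_le_half hK hw])
    (hg _ (one_sub_sum_mem_Icc_of_mem_vertexBox hK hw))

variable {C : Matrix ι ι ℝ} {g : ℝ → ℝ}

theorem monotoneOn_vertexMap (hC : ComparableEntries C K)
    (hg : HasLogGrowth (growthThreshold ι K) g) :
    MonotoneOn (vertexMap C m K g) (vertexBox m K) := by
  intro w hw v hv hwv
  have : Nonempty ι := ⟨m⟩
  have hK := hC.one_le m
  have hδ := two_mul_sq_add_one_le_growthThreshold (ι := ι) hK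
  refine ⟨fun k => ?_, hC.columnMass_mono (vertexRatios_nonneg_of_mem_vertexBox hK hw)
    (vertexRatios_mono hw.1.1 hwv.1 (by linarith [sum_le_quarter_of_mem_vertexBox hK hv]))
    (sq_mul_sum_vertexRatios_le_half hK hv) hw.1.2 hwv.2⟩
  have hweight : g (w.1 k) ≤ g (v.1 k) := hg.monotoneOn (growthThreshold_pos hK).le
    (apply_mem_Icc_of_mem_vertexBox hK hw k) (apply_mem_Icc_of_mem_vertexBox hK hv k) (hwv.1 k)
  have hfactor := hg.one_sub_mul_div_apply_one_sub_mono (by positivity) hδ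
    (sum_nonneg_of_mem_vertexBox hw) (Finset.sum_le_sum fun j _ => hwv.1 j)
    (by linarith [sum_le_quarter_of_mem_vertexBox hK hv]) (sq_add_one_mul_sum_le_half hK hv)
  have hgw := hg.pos _ (apply_mem_Icc_of_mem_vertexBox hK hw k)
  have hfw := weightFactor_pos hg.pos hK hw
  exact mul_le_mul (hwv.2 k) (mul_le_mul hweight hfactor hfw.le (hgw.le.trans hweight))
    (mul_pos hgw hfw).le (hC.pos_of_inv_le hv.1.2 k).le

theorem vertexMap_fst_le (hC : ComparableEntries C K)
    (hg : HasLogGrowth (growthThreshold ι K) g) (hw : w ∈ vertexBox m K) (k : {k // k ≠ m}) :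
    (vertexMap C m K g w).1 k ≤ (4 * K ^ 2 * Fintype.card ι)⁻¹ := by
  have : Nonempty ι := ⟨m⟩
  have hK := hC.one_le m
  have hpI := apply_mem_Icc_of_mem_vertexBox hK hw k
  have hsI := one_sub_sum_mem_Icc_of_mem_vertexBox hK hw
  have hsum0 := sum_nonneg_of_mem_vertexBox hw
  have hratio : g (w.1 k) / g (1 - ∑ j, w.1 j) ≤ 2 / growthThreshold ι K :=
    hg.div_le_of_half_le_sub (growthThreshold_pos hK) hpI hsI (by
      linarith [sum_le_quarter_of_mem_vertexBox hK hw, apply_le_quarter_of_mem_vertexBox hK hw k])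
  have hgp := hg.pos _ hpI
  have hgs := hg.pos _ hsI
  calc w.2 k * (g (w.1 k) * weightFactor K g (∑ j, w.1 j))
      ≤ w.2 k * (g (w.1 k) * (1 / g (1 - ∑ j, w.1 j))) := by
        unfold weightFactor
        have := (hC.pos_of_inv_le hw.1.2 k).le
        gcongr
        exact sub_le_self _ (by positivity)
    _ = w.2 k * (g (w.1 k) / g (1 - ∑ j, w.1 j)) := by rw [mul_one_div]
    _ ≤ 4 * K * (2 / growthThreshold ι K) :=
        mul_le_mul (hw.2.2 k) hratio (div_pos hgp hgs).le (by positivity)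
    _ = (4 * K ^ 2 * Fintype.card ι)⁻¹ := by
        unfold growthThreshold
        field_simp
        norm_num

theorem mapsTo_vertexMap (hC : ComparableEntries C K)
    (hg : HasLogGrowth (growthThreshold ι K) g) :
    MapsTo (vertexMap C m K g) (vertexBox m K) (vertexBox m K) := by
  intro w hw
  have hK := hC.one_le m
  have hy := vertexRatios_nonneg_of_mem_vertexBox hK hw
  have hsum := sq_mul_sum_vertexRatios_le_half hK hw
  exact ⟨⟨fun k => (mul_pos (hC.pos_of_inv_le hw.1.2 k) (mul_pos
        (hg.pos _ (apply_mem_Icc_of_mem_vertexBox hK hw k)) (weightFactor_pos hg.pos hK hw))).le,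
      hC.inv_le_columnMass hy hsum hw.1.2⟩,
    ⟨vertexMap_fst_le hC hg hw, hC.columnMass_le hy hsum hw.1.2⟩⟩

theorem exists_vertexMap_eq_self (hC : ComparableEntries C K)
    (hg : HasLogGrowth (growthThreshold ι K) g) :
    ∃ w ∈ vertexBox m K, vertexMap C m K g w = w := by
  have hK := hC.one_le m
  have hinv : K⁻¹ ≤ 4 * K := (inv_le_one_of_one_le₀ hK).trans (by linarith)
  exact exists_fixedPoint_of_monotoneOn_Icc (fun _ => exists_isLUB_pi_prod_pi)
    ⟨fun _ => by positivity, fun _ => hinv⟩ (mapsTo_vertexMap hC hg) (monotoneOn_vertexMap hC hg)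

theorem columnWeight_eq_smul_of_vertexMap_eq_self (hC : ComparableEntries C K)
    (hg : ∀ t ∈ Icc (0 : ℝ) 1, 0 < g t) (hw : w ∈ vertexBox m K)
    (hfix : vertexMap C m K g w = w) :
    columnWeight m K (vertexRatios w.1) w.2 =
      ((1 - ∑ k, w.1 k)⁻¹ * weightFactor K g (∑ k, w.1 k)) •
        (g ∘ insertAt m (1 - ∑ k, w.1 k) w.1) := by
  have hK := hC.one_le m
  have hgs := (hg _ (one_sub_sum_mem_Icc_of_mem_vertexBox hK hw)).ne'
  have hs : 1 - ∑ k, w.1 k ≠ 0 := by linarith [sum_le_quarter_of_mem_vertexBox hK hw]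
  refine funext ((forall_iff_and_forall_ne m).2 ⟨?_, fun k => ?_⟩)
  · simp only [columnWeight, insertAt_self, sum_vertexRatios, weightFactor, Pi.smul_apply,
      Function.comp_apply, smul_eq_mul]
    field_simp
    ring
  · have hB := (hC.pos_of_inv_le hw.1.2 k).ne'
    have hp : w.1 k = w.2 k *
        (g (w.1 k) * weightFactor K g (∑ j, w.1 j)) :=
      congrFun (congrArg Prod.fst hfix.symm) k
    simp only [columnWeight, insertAt_coe, vertexRatios, Pi.smul_apply, Pi.div_apply,
      Function.comp_apply, smul_eq_mul]
    rw [mul_div_assoc, mul_assoc, mul_comm _ (g (w.1 k)),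
      (div_eq_iff hB).2 (hp.trans (mul_comm _ _))]

theorem vecMul_reweight_eq_self_of_vertexMap_eq_self (hC : ComparableEntries C K)
    (hg : ∀ t ∈ Icc (0 : ℝ) 1, 0 < g t) (hw : w ∈ vertexBox m K)
    (hfix : vertexMap C m K g w = w) :
    insertAt m (1 - ∑ k, w.1 k) w.1 ᵥ* reweight C (g ∘ insertAt m (1 - ∑ k, w.1 k) w.1) =
      insertAt m (1 - ∑ k, w.1 k) w.1 := by
  have hK := hC.one_le m
  have hs : 0 < 1 - ∑ k, w.1 k := by linarith [sum_le_quarter_of_mem_vertexBox hK hw]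
  have hmulVec := hC.mulVec_columnWeight_pos (vertexRatios_nonneg_of_mem_vertexBox hK hw)
    (sq_mul_sum_vertexRatios_le_half hK hw) hw.1.2
  have hpoint : insertAt m (1 - ∑ k, w.1 k) w.1 =
      (1 - ∑ k, w.1 k) • insertAt m 1 (vertexRatios w.1) := by
    rw [smul_insertAt, mul_one, vertexRatios, smul_inv_smul₀ hs.ne']
  have hinvariant : insertAt m 1 (vertexRatios w.1) ᵥ*
      reweight C (columnWeight m K (vertexRatios w.1) w.2) = insertAt m 1 (vertexRatios w.1) := by
    refine vecMul_reweight_eq_self_of_forall_ne (fun i => (hmulVec i).ne') m fun k => ?_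
    have hmass : ((insertAt m 1 (vertexRatios w.1) /
        (C *ᵥ columnWeight m K (vertexRatios w.1) w.2)) ᵥ* C) k = w.2 k :=
      congrFun (congrArg Prod.snd hfix) k
    rw [vecMul_reweight_apply, hmass, columnWeight, insertAt_coe, insertAt_coe, Pi.div_apply,
      div_mul_cancel₀ _ (hC.pos_of_inv_le hw.1.2 k).ne']
  rw [← reweight_smul (mul_pos (inv_pos.2 hs) (weightFactor_pos hg hK hw)).ne',
    ← columnWeight_eq_smul_of_vertexMap_eq_self hC hg hw hfix, hpoint, smul_vecMul, hinvariant]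

end VertexMap

theorem exists_invariant_near_vertex {ι : Type*} [Fintype ι] {C : Matrix ι ι ℝ} {K : ℝ}
    {g : ℝ → ℝ} (hC : ComparableEntries C K)
    (hg : HasLogGrowth (growthThreshold ι K) g) (m : ι) :
    ∃ x ∈ stdSimplex ℝ ι, 1 / 2 < x m ∧ x ᵥ* reweight C (g ∘ x) = x := by
  classical
  obtain ⟨w, hw, hfix⟩ := exists_vertexMap_eq_self (m := m) hC hg
  refine ⟨insertAt m (1 - ∑ k, w.1 k) w.1,
    ⟨insertAt_nonneg m (one_sub_sum_mem_Icc_of_mem_vertexBox (hC.one_le m) hw).1 hw.1.1, ?_⟩, ?_,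
    vecMul_reweight_eq_self_of_vertexMap_eq_self hC hg.pos hw hfix⟩
  · rw [sum_insertAt, sub_add_cancel]
  · rw [insertAt_self]
    linarith [sum_le_quarter_of_mem_vertexBox (hC.one_le m) hw]

theorem eq_of_half_lt_of_mem_stdSimplex {ι : Type*} [Fintype ι] {x : ι → ℝ}
    (hx : x ∈ stdSimplex ℝ ι) {i j : ι} (hi : 1 / 2 < x i) (hj : 1 / 2 < x j) : i = j := by
  classical
  by_contra hij
  have hpair : x i + x j ≤ ∑ k, x k := by
    rw [← Finset.sum_pair hij]
    exact Finset.sum_le_sum_of_subset_of_nonneg (Finset.subset_univ _) fun k _ _ => hx.1 k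
  linarith [hx.2]

theorem multiple_fixed_points_for_positive_matrix_general {ι : Type*} [Fintype ι]
    (C : Matrix ι ι ℝ) (hCpos : ∀ i j, 0 < C i j) :
    ∃ δ : ℝ, 0 < δ ∧ ∀ g : ℝ → ℝ, HasLogGrowth δ g →
      ∃ x : ι → ι → ℝ, Function.Injective x ∧
        ∀ m, x m ∈ stdSimplex ℝ ι ∧ x m ᵥ* reweight C (g ∘ x m) = x m := by
  obtain hι | hι := isEmpty_or_nonempty ι
  · exact ⟨1, one_pos, fun g _ => ⟨isEmptyElim, Function.injective_of_subsingleton _, isEmptyElim⟩⟩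
  obtain ⟨K, hC⟩ := exists_comparableEntries hCpos
  refine ⟨growthThreshold ι K, growthThreshold_pos (hC.one_le hι.some), fun g hg => ?_⟩
  choose x hx hvertex hinvariant using exists_invariant_near_vertex hC hg
  exact ⟨x, fun i j hij => eq_of_half_lt_of_mem_stdSimplex (hx j) (hij ▸ hvertex i) (hvertex j),
    fun m => ⟨hx m, hinvariant m⟩⟩

/-- If `C` is a positive `(n+2) × (n+2)` matrix (size at least 2), then for `L⁻(g)`
large enough (depending only on `C`), the map `u_g` has at least two distinct fixed
points in the simplex. -/
theorem multiple_fixed_points_for_positive_matrix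
    (n : ℕ) (C : Matrix (Fin (n+2)) (Fin (n+2)) ℝ)
    (hCpos : ∀ i j, 0 < C i j) :
    ∃ δ : ℝ, 0 < δ ∧
      ∀ g g' : ℝ → ℝ, ∀ Lm : ℝ, IsAdmissible g g' →
        IsLeast (ratioSet g g') Lm → δ ≤ Lm →
        ∀ u : (Fin (n+2) → ℝ) → (Fin (n+2) → ℝ),
          (∀ x ∈ stdSimplex ℝ (Fin (n+2)), u x ∈ stdSimplex ℝ (Fin (n+2)) ∧
            Matrix.vecMul (u x) (Mg C g x) = u x ∧
            ∀ v ∈ stdSimplex ℝ (Fin (n+2)), Matrix.vecMul v (Mg C g x) = v → v = u x) →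
          ∃ x y : Fin (n+2) → ℝ, x ∈ stdSimplex ℝ (Fin (n+2)) ∧
            y ∈ stdSimplex ℝ (Fin (n+2)) ∧ x ≠ y ∧ u x = x ∧ u y = y := by
  obtain ⟨δ, hδ, hfixed⟩ := multiple_fixed_points_for_positive_matrix_general C hCpos
  refine ⟨δ, hδ, fun g g' Lm hg hLm hle u hu => ?_⟩
  obtain ⟨x, hinj, hx⟩ := hfixed g (hg.hasLogGrowth fun r hr => hle.trans (hLm.2 hr))
  have hux : ∀ m, u (x m) = x m := fun m => ((hu _ (hx m).1).2.2 _ (hx m).1 (hx m).2).symm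
  exact ⟨x 0, x 1, (hx 0).1, (hx 1).1, hinj.ne zero_ne_one, hux 0, hux 1⟩
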